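/- arXiv:1812.00777 — 2 statements merged into one kernel-verified Lean document; each statement's English description precedes it below -/
import Mathlib

section
/- The multiple zeta value map ζ, extended linearly to the span of convergent words in ℕ*, is an algebra morphism for the stuffle product: ζ(w ⧢₁ w') = ζ(w)·ζ(w') for all convergent words w, w' (where ⧢₁ is the 1-shuffle with respect to the semigroup (ℕ*,+)). Likewise the multiple zeta star value map ζ⋆ is an algebra morphism for the anti-stuffle product: ζ⋆(w ⧢₋₁ w') = ζ⋆(w)·ζ⋆(w') for all convergent words w, w'. -/
/-! ### Words and shuffle products -/

/-- `𝓦_Ω`: the free `ℝ`-vector space on words written in the alphabet `Ω`. -/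
abbrev WAlg (Ω : Type) := List Ω →₀ ℝ

/-- The basis element of `𝓦_Ω` corresponding to a word. -/
noncomputable def wdelta {Ω : Type} (w : List Ω) : WAlg Ω := Finsupp.single w 1

/-- The `λ`-shuffle product of two words with respect to the (semigroup) product `mul`
on `Ω`, as an element of `𝓦_Ω`.  For `lam = 1` this is the stuffle product, for
`lam = -1` the anti-stuffle product and for `lam = 0` the usual shuffle product. -/
noncomputable def shw {Ω : Type} (mul : Ω → Ω → Ω) (lam : ℝ) : List Ω → List Ω → WAlg Ω
  | [], w => wdelta w
  | a :: u, [] => wdelta (a :: u)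
  | a :: u, b :: v =>
      Finsupp.mapDomain (a :: ·) (shw mul lam u (b :: v)) +
      Finsupp.mapDomain (b :: ·) (shw mul lam (a :: u) v) +
      lam • Finsupp.mapDomain (mul a b :: ·) (shw mul lam u v)
termination_by w₁ w₂ => w₁.length + w₂.length
decreasing_by all_goals (simp; try omega)

/-- A word over `ℕ* = {1,2,…}` is convergent when it is empty or its first letter
is at least `2`. -/
def ConvWordN (w : List ℕ+) : Prop := ∀ a, w.head? = some a → 2 ≤ (a : ℕ)

/-- The multiple zeta value `ζ(s₁,…,s_k) = Σ_{n₁ > ⋯ > n_k ≥ 1} ∏ nᵢ^{-sᵢ}` of a word. -/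
noncomputable def zetaW (w : List ℕ+) : ℝ :=
  ∑' n : {f : Fin w.length → ℕ+ // StrictAnti f},
    ∏ i, ((n.1 i : ℕ) : ℝ) ^ (-((w.get i : ℕ) : ℝ))

/-- The multiple zeta star value `ζ⋆(s₁,…,s_k) = Σ_{n₁ ≥ ⋯ ≥ n_k ≥ 1} ∏ nᵢ^{-sᵢ}`. -/
noncomputable def zetaWstar (w : List ℕ+) : ℝ :=
  ∑' n : {f : Fin w.length → ℕ+ // Antitone f},
    ∏ i, ((n.1 i : ℕ) : ℝ) ^ (-((w.get i : ℕ) : ℝ))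

/-- The linear extension of `ζ` to the span of words. -/
noncomputable def zetaWAlg (x : WAlg ℕ+) : ℝ := x.sum fun w c => c • zetaW w

/-- The linear extension of `ζ⋆` to the span of words. -/
noncomputable def zetaWstarAlg (x : WAlg ℕ+) : ℝ := x.sum fun w c => c • zetaWstar w

/-! ### Truncated sums -/

section trunc

open Filter Topology

/-- The weight `(n+1)^{-a}`. -/
noncomputable def wt (n : ℕ) (a : ℕ+) : ℝ := ((n.succPNat : ℕ) : ℝ) ^ (-((a : ℕ) : ℝ))

theorem wt_nonneg (n : ℕ) (a : ℕ+) : 0 ≤ wt n a := by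
  unfold wt; positivity

theorem wt_add (n : ℕ) (a b : ℕ+) : wt n (a + b) = wt n a * wt n b := by
  unfold wt
  rw [← Real.rpow_add (by positivity)]
  congr 1
  push_cast
  ring

theorem wt_le (n : ℕ) (a : ℕ+) (k : ℕ) (h : k ≤ a) : wt n a ≤ (((n : ℝ) + 1) ^ k)⁻¹ := by
  unfold wt
  rw [← Real.rpow_natCast, ← Real.rpow_neg (by positivity), Nat.succPNat_coe, Nat.cast_succ]
  apply Real.rpow_le_rpow_of_exponent_le
  · have : (0 : ℝ) ≤ n := by positivity
    linarith
  · have : (k : ℝ) ≤ a := by exact_mod_cast h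
    linarith

/-- Truncated sums; `c = 0` is the strict version, `c = 1` the star version. -/
noncomputable def Zt (c : ℕ) : List ℕ+ → ℕ → ℝ
  | [], _ => 1
  | a :: u, N => ∑ n ∈ Finset.range N, wt n a * Zt c u (n + c)

/-- Linear extension. -/
noncomputable def ZA (c N : ℕ) (x : WAlg ℕ+) : ℝ := x.sum fun w r => r * Zt c w N

theorem ZA_add (c N : ℕ) (x y : WAlg ℕ+) : ZA c N (x + y) = ZA c N x + ZA c N y := by
  unfold ZA
  exact Finsupp.sum_add_index' (by simp) (by intros; ring)

theorem ZA_smul (c N : ℕ) (r : ℝ) (x : WAlg ℕ+) : ZA c N (r • x) = r * ZA c N x := by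
  unfold ZA
  rw [Finsupp.sum_smul_index (by simp), Finsupp.mul_sum]
  simp only [mul_assoc]

theorem ZA_delta (c N : ℕ) (w : List ℕ+) : ZA c N (wdelta w) = Zt c w N := by
  unfold ZA wdelta
  rw [Finsupp.sum_single_index] <;> simp

theorem ZA_map (c N : ℕ) (a : ℕ+) (x : WAlg ℕ+) :
    ZA c N (Finsupp.mapDomain (a :: ·) x)
      = ∑ n ∈ Finset.range N, wt n a * ZA c (n + c) x := by
  unfold ZA
  rw [Finsupp.sum_mapDomain_index (by simp) (by intros; ring)]
  simp only [Zt, Finsupp.sum, Finset.mul_sum]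
  rw [Finset.sum_comm]
  refine Finset.sum_congr rfl fun n _ => Finset.sum_congr rfl fun w _ => ?_
  ring

theorem ZA_shw (c : ℕ) (lam : ℝ) (hc : (c = 0 ∧ lam = 1) ∨ (c = 1 ∧ lam = -1)) :
    ∀ (k : ℕ) (w w' : List ℕ+), w.length + w'.length = k → ∀ N,
      ZA c N (shw (fun a b : ℕ+ => a + b) lam w w') = Zt c w N * Zt c w' N := by
  intro k
  induction k using Nat.strong_induction_on with
  | _ k ih =>
  intro w w' hk N
  match w, w' with
  | [], w' => simp [shw, ZA_delta, Zt]
  | a :: u, [] => simp [shw, ZA_delta, Zt]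
  | a :: u, b :: v =>
    simp only [List.length_cons] at hk
    have h1 := ih _ (by simp only [List.length_cons]; omega) u (b :: v) rfl
    have h2 := ih _ (by simp only [List.length_cons]; omega) (a :: u) v rfl
    have h3 := ih _ (by omega) u v rfl
    rw [shw]
    simp only [ZA_add, ZA_smul, ZA_map, h1, h2, h3]
    induction N with
    | zero => simp [Zt]
    | succ N ihN =>
      have e1 : ∀ (a : ℕ+) u, Zt c (a :: u) (N + 1)
          = Zt c (a :: u) N + wt N a * Zt c u (N + c) := by
        intro a u; simp [Zt, Finset.sum_range_succ]
      simp only [Finset.sum_range_succ]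
      rw [e1, e1]
      rcases hc with ⟨rfl, rfl⟩ | ⟨rfl, rfl⟩
      · simp only [add_zero] at *
        rw [wt_add]
        linear_combination ihN
      · rw [e1, e1, wt_add]
        linear_combination ihN

theorem Zt_nonneg (c : ℕ) (w : List ℕ+) : ∀ N, 0 ≤ Zt c w N := by
  induction w with
  | nil => intro N; simp [Zt]
  | cons a u ih =>
    intro N
    exact Finset.sum_nonneg fun n _ => mul_nonneg (wt_nonneg _ _) (ih _)

theorem Zt_mono (c : ℕ) (w : List ℕ+) : Monotone (Zt c w) := by
  cases w with
  | nil => intro M N _; simp [Zt]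
  | cons a u =>
    intro M N h
    exact Finset.sum_le_sum_of_subset_of_nonneg (Finset.range_mono h)
      fun n _ _ => mul_nonneg (wt_nonneg _ _) (Zt_nonneg _ _ _)

theorem Zt_le (c : ℕ) (hc : c ≤ 1) (w : List ℕ+) :
    ∀ N, Zt c w N ≤ ((harmonic N : ℚ) : ℝ) ^ w.length := by
  induction w with
  | nil => intro N; simp [Zt]
  | cons a u ih =>
    intro N
    have hH : ((harmonic N : ℚ) : ℝ) = ∑ n ∈ Finset.range N, ((n : ℝ) + 1)⁻¹ := by
      simp [harmonic]
    have hH0 : 0 ≤ ((harmonic N : ℚ) : ℝ) := by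
      rw [hH]; positivity
    calc Zt c (a :: u) N ≤ ∑ n ∈ Finset.range N, ((n : ℝ) + 1)⁻¹ * Zt c u N := by
          refine Finset.sum_le_sum fun n hn => ?_
          have := wt_le n a 1 a.2
          rw [pow_one] at this
          refine mul_le_mul this (Zt_mono c u ?_) (Zt_nonneg _ _ _) (by positivity)
          have := Finset.mem_range.1 hn
          omega
      _ = ((harmonic N : ℚ) : ℝ) * Zt c u N := by rw [← Finset.sum_mul, hH]
      _ ≤ _ := by
          rw [List.length_cons, pow_succ']
          exact mul_le_mul_of_nonneg_left (ih N) hH0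

theorem summable_aux (k : ℕ) :
    Summable fun n : ℕ => (((n : ℝ) + 1) ^ 2)⁻¹ * (1 + Real.log ((n : ℝ) + 1)) ^ k := by
  have hO : (fun x : ℝ => (1 + Real.log x) ^ k) =O[atTop] fun x : ℝ => x ^ (1 / 2 : ℝ) := by
    rcases Nat.eq_zero_or_pos k with rfl | hk
    · simp only [pow_zero]
      exact ((Asymptotics.isLittleO_const_left (c := (1 : ℝ))).2 (Or.inr
        (tendsto_abs_atTop_atTop.comp (tendsto_rpow_atTop (by norm_num))))).isBigO
    · have hk' : (0 : ℝ) < k := by exact_mod_cast hk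
      have h1 : (fun x : ℝ => 1 + Real.log x) =O[atTop] fun x : ℝ => x ^ (1 / (2 * k) : ℝ) := by
        have hp : (0 : ℝ) < 1 / (2 * k) := by positivity
        refine Asymptotics.IsBigO.add ?_ (isLittleO_log_rpow_atTop hp).isBigO
        exact ((Asymptotics.isLittleO_const_left (c := (1 : ℝ))).2 (Or.inr
          (tendsto_abs_atTop_atTop.comp (tendsto_rpow_atTop hp)))).isBigO
      refine (h1.pow k).congr' EventuallyEq.rfl ?_
      filter_upwards [eventually_ge_atTop 0] with x hx
      rw [← Real.rpow_natCast, ← Real.rpow_mul hx]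
      congr 1
      field_simp
  have hO2 : (fun x : ℝ => (x ^ 2)⁻¹ * (1 + Real.log x) ^ k)
      =O[atTop] fun x : ℝ => x ^ (-(3 / 2) : ℝ) := by
    refine ((Asymptotics.isBigO_refl (fun x : ℝ => (x ^ 2)⁻¹) atTop).mul hO).congr'
      EventuallyEq.rfl ?_
    filter_upwards [eventually_gt_atTop 0] with x hx
    rw [← Real.rpow_natCast, ← Real.rpow_neg hx.le, ← Real.rpow_add hx]
    norm_num
  have hs : Summable fun n : ℕ => (n : ℝ) ^ (-(3 / 2) : ℝ) :=
    Real.summable_nat_rpow.2 (by norm_num)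
  have := summable_of_isBigO_nat hs (hO2.comp_tendsto tendsto_natCast_atTop_atTop)
  have := (summable_nat_add_iff 1).2 this
  simpa using this

theorem Zt_bdd (c : ℕ) (hc : c ≤ 1) (w : List ℕ+) (hw : ConvWordN w) :
    ∃ C, ∀ N, Zt c w N ≤ C := by
  cases w with
  | nil => exact ⟨1, fun N => by simp [Zt]⟩
  | cons a u =>
    have ha : 2 ≤ (a : ℕ) := hw a rfl
    refine ⟨_, fun N => le_trans ?_ ((summable_aux u.length).sum_le_tsum (Finset.range N)
      fun n _ => ?_)⟩
    · refine Finset.sum_le_sum fun n _ => ?_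
      refine mul_le_mul (wt_le n a 2 ha) ?_ (Zt_nonneg _ _ _) (by positivity)
      calc Zt c u (n + c) ≤ Zt c u (n + 1) := Zt_mono c u (by omega)
        _ ≤ _ := Zt_le c hc u _
        _ ≤ _ := by
          have := harmonic_le_one_add_log (n + 1)
          push_cast at this
          refine pow_le_pow_left₀ ?_ (by exact_mod_cast this) _
          simp only [harmonic]
          push_cast
          positivity
    · have : 0 ≤ Real.log ((n : ℝ) + 1) := Real.log_nonneg (by
        have : (0 : ℝ) ≤ n := by positivity
        linarith)
      positivity

/-- The positive integers up to `N`. -/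
def AN (N : ℕ) : Finset ℕ+ := (Finset.range N).map ⟨Nat.succPNat, Nat.succPNat_injective⟩

theorem mem_AN (N : ℕ) (p : ℕ+) : p ∈ AN N ↔ (p : ℕ) ≤ N := by
  simp only [AN, Finset.mem_map, Finset.mem_range, Function.Embedding.coeFn_mk]
  constructor
  · rintro ⟨n, hn, rfl⟩
    simpa using hn
  · intro h
    refine ⟨p.natPred, ?_, by simp⟩
    have := p.natPred_add_one
    omega

/-- Common form of strict and weak decrease. -/
def DecRel (c : ℕ) {k : ℕ} (f : Fin k → ℕ+) : Prop := ∀ i j, i < j → (f j : ℕ) + 1 ≤ f i + c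

theorem DecRel_cons (c : ℕ) {k : ℕ} (n : ℕ+) (f : Fin k → ℕ+) :
    DecRel c (Fin.cons n f : Fin (k + 1) → ℕ+) ↔ (∀ j, (f j : ℕ) + 1 ≤ n + c) ∧ DecRel c f := by
  unfold DecRel
  simp [Fin.forall_fin_succ, Fin.succ_lt_succ_iff]

open Classical in
/-- Index set of the truncated sum. -/
noncomputable def SN (c k N : ℕ) : Finset (Fin k → ℕ+) :=
  (Fintype.piFinset fun _ => AN N).filter (DecRel c)

theorem mem_SN (c k N : ℕ) (f : Fin k → ℕ+) : f ∈ SN c k N ↔ (∀ i, (f i : ℕ) ≤ N) ∧ DecRel c f := by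
  simp [SN, mem_AN]

/-- The summand. -/
noncomputable def tm (w : List ℕ+) (f : Fin w.length → ℕ+) : ℝ :=
  ∏ i, ((f i : ℕ) : ℝ) ^ (-((w.get i : ℕ) : ℝ))

theorem tm_cons (a : ℕ+) (u : List ℕ+) (n : ℕ+) (f : Fin u.length → ℕ+) :
    tm (a :: u) (Fin.cons n f : Fin (u.length + 1) → ℕ+)
      = ((n : ℕ) : ℝ) ^ (-((a : ℕ) : ℝ)) * tm u f := by
  unfold tm
  exact Fin.prod_univ_succ (n := u.length) _

theorem sum_SN (c : ℕ) (hc : c ≤ 1) (w : List ℕ+) :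
    ∀ N, ∑ f ∈ SN c w.length N, tm w f = Zt c w N := by
  induction w with
  | nil =>
    intro N
    have : SN c ([] : List ℕ+).length N = {fun i => i.elim0} := by
      ext f
      rw [mem_SN]
      simp only [Finset.mem_singleton]
      constructor
      · intro _; funext i; exact i.elim0
      · intro _; exact ⟨fun i => Fin.elim0 i, fun i => Fin.elim0 i⟩
    rw [this, Finset.sum_singleton]
    simp [tm, Zt]
  | cons a u ih =>
    intro N
    simp only [Zt, ← ih, Finset.mul_sum]
    rw [Finset.sum_sigma']
    symm
    refine Finset.sum_bij'
      (i := fun (x : (_ : ℕ) × (Fin u.length → ℕ+)) _ =>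
        (Fin.cons x.1.succPNat x.2 : Fin (u.length + 1) → ℕ+))
      (j := fun (f : Fin (u.length + 1) → ℕ+) _ => ⟨(f 0).natPred, Fin.tail f⟩) ?_ ?_ ?_ ?_ ?_
    · rintro ⟨n, f⟩ h
      simp only [Finset.mem_sigma, Finset.mem_range, mem_SN] at h
      refine (mem_SN c (u.length + 1) N _).2 ⟨?_, ?_⟩
      · refine Fin.cases ?_ ?_
        · simpa using h.1
        · intro i
          have := h.2.1 i
          simp only [Fin.cons_succ]
          omega
      · rw [DecRel_cons]
        refine ⟨fun j => ?_, h.2.2⟩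
        have := h.2.1 j
        simp only [Nat.succPNat_coe]
        omega
    · intro f h
      have h := (mem_SN c (u.length + 1) N f).1 h
      have h2 := h.2
      rw [← Fin.cons_self_tail f, DecRel_cons] at h2
      have e := (f 0).natPred_add_one
      simp only [Finset.mem_sigma, Finset.mem_range, mem_SN]
      refine ⟨?_, ?_, h2.2⟩
      · have := h.1 0
        omega
      · intro i
        have := h2.1 i
        omega
    · rintro ⟨n, f⟩ h
      simp
    · intro f h
      simp
    · rintro ⟨n, f⟩ h
      exact (tm_cons a u n.succPNat f).symm

theorem tm_nonneg (w : List ℕ+) (f : Fin w.length → ℕ+) : 0 ≤ tm w f := by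
  unfold tm; positivity

theorem tendsto_Zt (c : ℕ) (hc : c ≤ 1) (w : List ℕ+) (hw : ConvWordN w)
    (p : (Fin w.length → ℕ+) → Prop) (hp : ∀ f, p f ↔ DecRel c f) :
    Tendsto (Zt c w) atTop (𝓝 (∑' n : {f : Fin w.length → ℕ+ // p f}, tm w n.1)) := by
  classical
  obtain rfl : p = DecRel c := by funext f; exact propext (hp f)
  let s : ℕ → Finset {f : Fin w.length → ℕ+ // DecRel c f} :=
    fun N => (SN c w.length N).subtype (DecRel c)
  have hs : ∀ N, ∑ x ∈ s N, tm w x.1 = Zt c w N := by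
    intro N
    rw [← sum_SN c hc w N]
    simp only [s]
    rw [Finset.sum_subtype_eq_sum_filter (f := tm w), Finset.filter_true_of_mem]
    intro f hf
    exact ((mem_SN _ _ _ _).1 hf).2
  have hmono : Monotone s := by
    intro M N h x hx
    simp only [s, Finset.mem_subtype, mem_SN] at hx ⊢
    exact ⟨fun i => (hx.1 i).trans h, hx.2⟩
  have hex : ∀ x, ∃ N, x ∈ s N := by
    intro x
    refine ⟨∑ i, (x.1 i : ℕ), ?_⟩
    simp only [s, Finset.mem_subtype, mem_SN]
    exact ⟨fun i => Finset.single_le_sum (f := fun i => (x.1 i : ℕ)) (by simp)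
      (Finset.mem_univ i), x.2⟩
  have ht : Tendsto s atTop atTop := tendsto_atTop_finset_of_monotone hmono hex
  obtain ⟨C, hC⟩ := Zt_bdd c hc w hw
  have hsum : Summable fun n : {f : Fin w.length → ℕ+ // DecRel c f} => tm w n.1 := by
    refine summable_of_sum_le (c := C) (fun x => tm_nonneg w x.1) fun t => ?_
    obtain ⟨N, hN⟩ := (ht.eventually (eventually_ge_atTop t)).exists
    calc _ ≤ ∑ x ∈ s N, tm w x.1 :=
          Finset.sum_le_sum_of_subset_of_nonneg hN fun x _ _ => tm_nonneg w x.1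
      _ ≤ C := by rw [hs]; exact hC N
  have := hsum.hasSum.comp ht
  refine this.congr fun N => ?_
  exact hs N

theorem conv_shw (lam : ℝ) (w w' : List ℕ+) (hw : ConvWordN w) (hw' : ConvWordN w') :
    ∀ x ∈ (shw (fun a b : ℕ+ => a + b) lam w w').support, ConvWordN x := by
  classical
  have hd : ∀ (w x : List ℕ+), ConvWordN w → x ∈ (wdelta w).support → ConvWordN x := by
    intro w x h hx
    have := Finsupp.support_single_subset hx
    rw [Finset.mem_singleton] at this
    exact this ▸ h
  have hm : ∀ (a : ℕ+) (y : WAlg ℕ+) (x : List ℕ+), 2 ≤ (a : ℕ) →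
      x ∈ (Finsupp.mapDomain (a :: ·) y).support → ConvWordN x := by
    intro a y x h hx
    obtain ⟨z, _, rfl⟩ := Finset.mem_image.1 (Finsupp.mapDomain_support hx)
    intro b hb
    simp only [List.head?_cons, Option.some.injEq] at hb
    exact hb ▸ h
  intro x hx
  match w, w' with
  | [], w' => rw [shw] at hx; exact hd _ _ hw' hx
  | a :: u, [] => rw [shw] at hx; exact hd _ _ hw hx
  | a :: u, b :: v =>
    have ha : 2 ≤ (a : ℕ) := hw a rfl
    have hb : 2 ≤ (b : ℕ) := hw' b rfl
    rw [shw] at hx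
    rcases Finset.mem_union.1 (Finsupp.support_add hx) with hx | hx
    · rcases Finset.mem_union.1 (Finsupp.support_add hx) with hx | hx
      · exact hm _ _ _ ha hx
      · exact hm _ _ _ hb hx
    · refine hm _ _ _ ?_ (Finsupp.support_smul hx)
      rw [PNat.add_coe]
      omega

theorem main_aux (c : ℕ) (lam : ℝ) (hc : (c = 0 ∧ lam = 1) ∨ (c = 1 ∧ lam = -1))
    (z : List ℕ+ → ℝ) (hz : ∀ w, ConvWordN w → Tendsto (Zt c w) atTop (𝓝 (z w)))
    (w w' : List ℕ+) (hw : ConvWordN w) (hw' : ConvWordN w') :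
    ((shw (fun a b : ℕ+ => a + b) lam w w').sum fun w r => r • z w) = z w * z w' := by
  have h1 : Tendsto (fun N => ZA c N (shw (fun a b : ℕ+ => a + b) lam w w')) atTop
      (𝓝 ((shw (fun a b : ℕ+ => a + b) lam w w').sum fun w r => r • z w)) := by
    unfold ZA Finsupp.sum
    refine tendsto_finsetSum _ fun x hx => ?_
    exact (hz x (conv_shw lam w w' hw hw' x hx)).const_mul _
  have h2 := (hz w hw).mul (hz w' hw')
  refine tendsto_nhds_unique h1 (h2.congr fun N => ?_)
  exact (ZA_shw c lam hc _ w w' rfl N).symm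

theorem rel_zero {k : ℕ} (f : Fin k → ℕ+) : StrictAnti f ↔ DecRel 0 f := by
  constructor
  · intro h i j hij
    have : (f j : ℕ) < f i := h hij
    omega
  · intro h i j hij
    have := h i j hij
    have : (f j : ℕ) < f i := by omega
    exact this

theorem rel_one {k : ℕ} (f : Fin k → ℕ+) : Antitone f ↔ DecRel 1 f := by
  constructor
  · intro h i j hij
    have : (f j : ℕ) ≤ f i := h hij.le
    omega
  · intro h i j hij
    rcases hij.eq_or_lt with rfl | hij
    · exact le_rfl
    · have := h i j hij
      have : (f j : ℕ) ≤ f i := by omega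
      exact this

end trunc

/-- **Statement 10** (Proposition `prop:zeta_stuffle_mor`).
The multiple zeta value map `ζ` is an algebra morphism for the stuffle product `⧢₁`
(taken with respect to the semigroup `(ℕ*, +)`) on convergent words, and the multiple
zeta star value map `ζ⋆` is an algebra morphism for the anti-stuffle product `⧢₋₁`. -/
theorem statement10 :
    (∀ w w' : List ℕ+, ConvWordN w → ConvWordN w' →
      zetaWAlg (shw (fun a b : ℕ+ => a + b) 1 w w') = zetaW w * zetaW w') ∧
    (∀ w w' : List ℕ+, ConvWordN w → ConvWordN w' →
      zetaWstarAlg (shw (fun a b : ℕ+ => a + b) (-1) w w') = zetaWstar w * zetaWstar w') := by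
  refine ⟨fun w w' hw hw' => ?_, fun w w' hw hw' => ?_⟩
  · exact main_aux 0 1 (Or.inl ⟨rfl, rfl⟩) zetaW
      (fun w hw => tendsto_Zt 0 (by norm_num) w hw _ rel_zero) w w' hw hw'
  · exact main_aux 1 (-1) (Or.inr ⟨rfl, rfl⟩) zetaWstar
      (fun w hw => tendsto_Zt 1 le_rfl w hw _ rel_one) w w' hw hw'
end

section
/- The integration operator ∫, defined by (∫σ)(x) = ∫₁^x σ(t)dt, maps 𝓟^{α;l} into 𝓟^{α+1;l} + 𝓟^{0;0} for every α ∈ ℝ∖ℤ_{≥−1} and l ∈ ℕ; furthermore it maps 𝓟^{−1;l} into 𝓟^{0;l+1} + 𝓟^{0;0} for every l ∈ ℕ. -/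
open Set

/-! ### Symbols and log-polyhomogeneous symbols -/

/-- A symbol of order `r` on `[c,∞)`: a smooth function whose `k`-th derivative is
`O(x^{r-k})` on `[c,∞)`, for every `k`. -/
def IsSymbolOn (c r : ℝ) (f : ℝ → ℝ) : Prop :=
  ContDiffOn ℝ (⊤ : ℕ∞) f (Ici c) ∧
  ∀ k : ℕ, ∃ C : ℝ, ∀ x ≥ c, |iteratedDerivWithin k f (Ici c) x| ≤ C * x ^ (r - k)

/-- A classical (poly-homogeneous) symbol of order `α` on `[c,∞)`. -/
def IsCSOn (c α : ℝ) (f : ℝ → ℝ) : Prop :=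
  IsSymbolOn c α f ∧
  ∃ a : ℕ → ℝ, ∀ N : ℕ,
    IsSymbolOn c (α - N) fun x => f x - ∑ j ∈ Finset.range N, a j * x ^ (α - j)

/-- Membership in `𝓟^{α;k}(ℝ_{≥c})`, the space of log-polyhomogeneous symbols of order
`(α,k)`: sums `Σ_{l ≤ k} f_l(x)·log^l(x)` with each `f_l` a classical symbol of order `α`. -/
def MemP (c α : ℝ) (k : ℕ) (f : ℝ → ℝ) : Prop :=
  ∃ g : ℕ → ℝ → ℝ, (∀ l, l ≤ k → IsCSOn c α (g l)) ∧
    ∀ x ≥ c, f x = ∑ l ∈ Finset.range (k + 1), g l x * (Real.log x) ^ l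

/-- Membership in the sum of spaces `𝓟^{α;k}(ℝ_{≥c}) + 𝓟^{β;m}(ℝ_{≥c})`. -/
def MemPsum (c α : ℝ) (k : ℕ) (β : ℝ) (m : ℕ) (f : ℝ → ℝ) : Prop :=
  ∃ g h : ℝ → ℝ, MemP c α k g ∧ MemP c β m h ∧ ∀ x ≥ c, f x = g x + h x

/-- The periodised Bernoulli polynomial `B̄₂(t) = B₂(t - ⌊t⌋)`, as a real function. -/
noncomputable def periodicBernoulli2 (t : ℝ) : ℝ :=
  ((Polynomial.bernoulli 2).map (algebraMap ℚ ℝ)).eval (Int.fract t)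

/-- The Euler--MacLaurin operator `P` (with the choice `K = 2`, of which the expression
is independent):
`P(σ)(x) = ∫₁^x σ + ½(σ(x)+σ(1)) + (B₂/2!)(σ'(x)-σ'(1)) - (1/2!)∫₁^x B̄₂(t) σ''(t) dt`. -/
noncomputable def EMop (σ : ℝ → ℝ) (x : ℝ) : ℝ :=
  (∫ t in (1:ℝ)..x, σ t) + (σ x + σ 1) / 2 +
    (((bernoulli 2 : ℚ) : ℝ) / 2) *
      (derivWithin σ (Ici 1) x - derivWithin σ (Ici 1) 1) -
    (1 / 2) * ∫ t in (1:ℝ)..x, periodicBernoulli2 t * iteratedDerivWithin 2 σ (Ici 1) t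

/-- The integration operator `(∫σ)(x) = ∫₁^x σ(t) dt`. -/
noncomputable def intOp (σ : ℝ → ℝ) (x : ℝ) : ℝ := ∫ t in (1:ℝ)..x, σ t


namespace S17

open Filter Topology MeasureTheory

theorem symb_congr {r : ℝ} {f g : ℝ → ℝ} (hf : IsSymbolOn 1 r f) (h : ∀ x ≥ 1, g x = f x) :
    IsSymbolOn 1 r g := by
  refine ⟨hf.1.congr fun x hx => h x hx, fun k => ?_⟩
  obtain ⟨C, hC⟩ := hf.2 k
  refine ⟨C, fun x hx => ?_⟩
  rw [iteratedDerivWithin_congr (s := Ici 1) (fun x hx => h x hx) hx]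
  exact hC x hx

theorem symb_bound {r : ℝ} {f : ℝ → ℝ} (hf : IsSymbolOn 1 r f) (k : ℕ) :
    ∃ C : ℝ, 0 ≤ C ∧ ∀ x ≥ 1, |iteratedDerivWithin k f (Ici 1) x| ≤ C * x ^ (r - k) := by
  obtain ⟨C, hC⟩ := hf.2 k
  refine ⟨C, ?_, hC⟩
  have := (abs_nonneg _).trans (hC 1 le_rfl)
  simpa using this

theorem symb_mono {r s : ℝ} (hrs : r ≤ s) {f : ℝ → ℝ} (hf : IsSymbolOn 1 r f) :
    IsSymbolOn 1 s f := by
  refine ⟨hf.1, fun k => ?_⟩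
  obtain ⟨C, hC0, hC⟩ := symb_bound hf k
  refine ⟨C, fun x hx => (hC x hx).trans ?_⟩
  exact mul_le_mul_of_nonneg_left (Real.rpow_le_rpow_of_exponent_le hx (by linarith)) hC0

theorem cda {f : ℝ → ℝ} (hf : ContDiffOn ℝ (⊤ : ℕ∞) f (Ici 1)) (k : ℕ) {x : ℝ} (hx : x ≥ 1) :
    ContDiffWithinAt ℝ k f (Ici 1) x :=
  (hf x hx).of_le (by exact_mod_cast le_top)

theorem symb_add {r : ℝ} {f g : ℝ → ℝ} (hf : IsSymbolOn 1 r f) (hg : IsSymbolOn 1 r g) :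
    IsSymbolOn 1 r (fun x => f x + g x) := by
  refine ⟨hf.1.add hg.1, fun k => ?_⟩
  obtain ⟨C, hC⟩ := hf.2 k
  obtain ⟨D, hD⟩ := hg.2 k
  refine ⟨C + D, fun x hx => ?_⟩
  rw [iteratedDerivWithin_fun_add (s := Ici 1) hx (uniqueDiffOn_Ici 1) (cda hf.1 k hx) (cda hg.1 k hx), add_mul]
  exact (abs_add_le _ _).trans (add_le_add (hC x hx) (hD x hx))

theorem symb_mul {r s : ℝ} {f g : ℝ → ℝ} (hf : IsSymbolOn 1 r f) (hg : IsSymbolOn 1 s g) :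
    IsSymbolOn 1 (r + s) (fun x => f x * g x) := by
  refine ⟨hf.1.mul hg.1, fun k => ?_⟩
  choose C hC0 hC using symb_bound hf
  choose D hD0 hD using symb_bound hg
  refine ⟨∑ i ∈ Finset.range (k + 1), (k.choose i : ℝ) * C i * D (k - i), fun x hx => ?_⟩
  have := iteratedDerivWithin_mul (s := Ici 1) hx (uniqueDiffOn_Ici 1) (cda hf.1 k hx) (cda hg.1 k hx)
  rw [show (fun x => f x * g x) = f * g from rfl, this, Finset.sum_mul]
  refine (Finset.abs_sum_le_sum_abs _ _).trans (Finset.sum_le_sum fun i hi => ?_)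
  have hik : i ≤ k := by simpa [Nat.lt_succ_iff] using hi
  have hx0 : (0:ℝ) < x := by linarith
  rw [abs_mul, abs_mul, Nat.abs_cast]
  have e : x ^ (r + s - k) = x ^ (r - i) * x ^ (s - ((k - i : ℕ) : ℝ)) := by
    rw [← Real.rpow_add hx0]; congr 1; push_cast [Nat.cast_sub hik]; ring
  calc _ ≤ (k.choose i : ℝ) * (C i * x ^ (r - i)) * (D (k - i) * x ^ (s - ((k - i : ℕ) : ℝ))) := by
        have := hC0 i
        gcongr
        · exact hC i x hx
        · exact hD (k - i) x hx
    _ = _ := by rw [e]; ring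

theorem rpow_iter (r : ℝ) (k : ℕ) : ∃ c : ℝ, ∀ x ≥ (1:ℝ),
    iteratedDerivWithin k (fun x : ℝ => x ^ r) (Ici 1) x = c * x ^ (r - k) := by
  induction k with
  | zero => exact ⟨1, fun x hx => by simp⟩
  | succ k ih =>
    obtain ⟨c, hc⟩ := ih
    refine ⟨c * (r - k), fun x hx => ?_⟩
    have hx0 : x ≠ 0 := by linarith
    rw [iteratedDerivWithin_succ, derivWithin_congr (s := Ici 1) (fun y hy => hc y hy) (hc x hx)]
    have h := ((Real.hasDerivAt_rpow_const (p := r - k) (Or.inl hx0)).const_mul c)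
    rw [(h.hasDerivWithinAt (s := Ici 1)).derivWithin (uniqueDiffOn_Ici 1 x hx)]
    rw [show r - ((k + 1 : ℕ) : ℝ) = r - k - 1 by push_cast; ring]
    ring

theorem symb_rpow (r : ℝ) : IsSymbolOn 1 r (fun x : ℝ => x ^ r) := by
  refine ⟨fun x hx => (Real.contDiffAt_rpow_const_of_ne ?_).contDiffWithinAt, fun k => ?_⟩
  · have : (1:ℝ) ≤ x := hx
    linarith
  obtain ⟨c, hc⟩ := rpow_iter r k
  refine ⟨|c|, fun x hx => ?_⟩
  have hx0 : (0:ℝ) ≤ x := by linarith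
  rw [hc x hx, abs_mul, abs_of_nonneg (Real.rpow_nonneg hx0 _)]

theorem symb_const (c : ℝ) : IsSymbolOn 1 0 (fun _ : ℝ => c) := by
  refine ⟨contDiffOn_const, fun k => ?_⟩
  rcases k with _ | k
  · exact ⟨|c|, fun x hx => by simp⟩
  · refine ⟨0, fun x hx => ?_⟩
    rw [iteratedDerivWithin_const]
    simp

theorem symb_zero (r : ℝ) : IsSymbolOn 1 r (fun _ : ℝ => 0) := by
  refine ⟨contDiffOn_const, fun k => ⟨0, fun x hx => ?_⟩⟩
  rw [iteratedDerivWithin_const]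
  simp

theorem symb_smul {r : ℝ} (c : ℝ) {f : ℝ → ℝ} (hf : IsSymbolOn 1 r f) :
    IsSymbolOn 1 r (fun x => c * f x) := by
  have := symb_mul (symb_const c) hf
  rwa [zero_add] at this

/-- Integration of a symbol of order `< -1` vanishing at infinity. -/
theorem symb_prim {r : ℝ} (hr : r < -1) {R D : ℝ → ℝ} (hR : IsSymbolOn 1 r R)
    (hD : ∀ x ≥ 1, HasDerivWithinAt D (R x) (Ici 1) x) (hlim : Tendsto D atTop (𝓝 0)) :
    IsSymbolOn 1 (r + 1) D := by
  have hdw : ∀ x ∈ Ici (1:ℝ), derivWithin D (Ici 1) x = R x := fun x hx =>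
    (hD x hx).derivWithin (uniqueDiffOn_Ici 1 x hx)
  refine ⟨?_, fun k => ?_⟩
  · refine (contDiffOn_infty_iff_derivWithin (uniqueDiffOn_Ici 1)).2
      ⟨fun x hx => (hD x hx).differentiableWithinAt, hR.1.congr hdw⟩
  rcases k with _ | k
  · obtain ⟨C, hC0, hC⟩ := symb_bound hR 0
    simp only [iteratedDerivWithin_zero, Nat.cast_zero, sub_zero] at hC ⊢
    refine ⟨C * (-1 / (r + 1)), fun x hx => ?_⟩
    have hx0 : 0 < x := by linarith
    have hI := integrableOn_Ioi_rpow_of_lt hr hx0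
    have hbd : ∀ᵐ t ∂(volume.restrict (Ioi x)), ‖R t‖ ≤ C * t ^ r := by
      refine (ae_restrict_iff' measurableSet_Ioi).2 (Eventually.of_forall fun t ht => ?_)
      exact hC t (hx.le.trans (le_of_lt ht))
    have hRI : IntegrableOn R (Ioi x) := by
      refine Integrable.mono' (hI.const_mul C) ?_ hbd
      refine (hR.1.continuousOn.mono ?_).aestronglyMeasurable measurableSet_Ioi
      exact fun t ht => hx.le.trans (le_of_lt ht)
    have key : ∫ t in Ioi x, R t = 0 - D x := by
      refine integral_Ioi_of_hasDerivAt_of_tendsto ?_ (fun t ht => ?_) hRI hlim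
      · exact ((hD x hx).continuousWithinAt).mono (Ici_subset_Ici.2 hx)
      · have ht1 : 1 < t := lt_of_le_of_lt hx ht
        exact (hD t ht1.le).hasDerivAt (Ici_mem_nhds ht1)
    have h2 : |D x| = ‖∫ t in Ioi x, R t‖ := by rw [key]; simp
    rw [h2]
    refine (norm_integral_le_of_norm_le (hI.const_mul C) hbd).trans (le_of_eq ?_)
    rw [integral_const_mul, integral_Ioi_rpow_of_lt hr hx0]
    ring
  · obtain ⟨C, hC⟩ := hR.2 k
    refine ⟨C, fun x hx => ?_⟩
    rw [iteratedDerivWithin_succ', iteratedDerivWithin_congr hdw hx]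
    rw [show r + 1 - ((k + 1 : ℕ) : ℝ) = r - k by push_cast; ring]
    exact hC x hx

theorem symb_down {α : ℝ} {f : ℝ → ℝ} {a : ℕ → ℝ} (N : ℕ)
    (h : IsSymbolOn 1 (α - (N + 1 : ℕ))
      fun x => f x - ∑ j ∈ Finset.range (N + 1), a j * x ^ (α - j)) :
    IsSymbolOn 1 (α - N) fun x => f x - ∑ j ∈ Finset.range N, a j * x ^ (α - j) := by
  have h1 := symb_mono (show α - (N + 1 : ℕ) ≤ α - N by push_cast; linarith) h
  refine symb_congr (symb_add h1 (symb_smul (a N) (symb_rpow (α - N)))) fun x hx => ?_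
  rw [Finset.sum_range_succ]
  ring

theorem cs_of {α : ℝ} {f : ℝ → ℝ} (a : ℕ → ℝ) (M : ℕ)
    (h : ∀ N, M ≤ N →
      IsSymbolOn 1 (α - N) fun x => f x - ∑ j ∈ Finset.range N, a j * x ^ (α - j)) :
    IsCSOn 1 α f := by
  have key : ∀ d N, M ≤ N + d →
      IsSymbolOn 1 (α - N) fun x => f x - ∑ j ∈ Finset.range N, a j * x ^ (α - j) := by
    intro d
    induction d with
    | zero => exact fun N hN => h N hN
    | succ d ih => exact fun N hN => symb_down N (ih (N + 1) (by omega))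
  have key' := fun N => key M N (by omega)
  refine ⟨?_, a, key'⟩
  simpa using key' 0

theorem cs_add {α : ℝ} {f g : ℝ → ℝ} (hf : IsCSOn 1 α f) (hg : IsCSOn 1 α g) :
    IsCSOn 1 α (fun x => f x + g x) := by
  obtain ⟨-, a, ha⟩ := hf
  obtain ⟨-, b, hb⟩ := hg
  refine cs_of (fun j => a j + b j) 0 fun N _ => symb_congr (symb_add (ha N) (hb N)) fun x _ => ?_
  simp only [add_mul, Finset.sum_add_distrib]
  ring

theorem cs_smul {α : ℝ} (c : ℝ) {f : ℝ → ℝ} (hf : IsCSOn 1 α f) :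
    IsCSOn 1 α (fun x => c * f x) := by
  obtain ⟨-, a, ha⟩ := hf
  refine cs_of (fun j => c * a j) 0 fun N _ => symb_congr (symb_smul c (ha N)) fun x _ => ?_
  simp only [mul_assoc, ← Finset.mul_sum]
  ring

theorem cs_zero (α : ℝ) : IsCSOn 1 α (fun _ => 0) :=
  cs_of (fun _ => 0) 0 fun N _ => symb_congr (symb_zero _) fun x _ => by simp

theorem cs_const (c : ℝ) : IsCSOn 1 0 (fun _ => c) := by
  refine cs_of (fun j => if j = 0 then c else 0) 1 fun N hN =>
    symb_congr (symb_zero _) fun x _ => ?_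
  obtain ⟨n, rfl⟩ : ∃ n, N = n + 1 := ⟨N - 1, by omega⟩
  rw [Finset.sum_range_succ']
  simp

theorem cs_raise {α : ℝ} {f : ℝ → ℝ} (hf : IsCSOn 1 (α - 1) f) : IsCSOn 1 α f := by
  obtain ⟨-, a, ha⟩ := hf
  refine cs_of (fun j => if j = 0 then 0 else a (j - 1)) 1 fun N hN => ?_
  obtain ⟨n, rfl⟩ : ∃ n, N = n + 1 := ⟨N - 1, by omega⟩
  have := ha n
  rw [show α - 1 - n = α - (n + 1 : ℕ) by push_cast; ring] at this
  refine symb_congr this fun x _ => ?_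
  rw [Finset.sum_range_succ']
  simp [sub_sub, add_comm]

theorem cs_tail {α : ℝ} {f : ℝ → ℝ} (hf : IsCSOn 1 α f) :
    ∃ a, IsCSOn 1 (α - 1) (fun x => f x - a * x ^ α) := by
  obtain ⟨-, a, ha⟩ := hf
  refine ⟨a 0, cs_of (fun j => a (j + 1)) 0 fun n hN => ?_⟩
  have := ha (n + 1)
  rw [show α - (n + 1 : ℕ) = α - 1 - n by push_cast; ring] at this
  refine symb_congr this fun x _ => ?_
  rw [Finset.sum_range_succ']
  simp only [Nat.cast_zero, sub_zero, Nat.cast_add, Nat.cast_one, sub_sub, add_comm (1:ℝ)]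
  ring

theorem cs_div {α : ℝ} {f : ℝ → ℝ} (hf : IsCSOn 1 (α + 1) f) :
    IsCSOn 1 α (fun x => f x * x⁻¹) := by
  obtain ⟨-, a, ha⟩ := hf
  refine cs_of a 0 fun n hN => ?_
  have := symb_mul (ha n) (symb_rpow (-1))
  rw [show α + 1 - n + -1 = α - n by ring] at this
  refine symb_congr this fun x hx => ?_
  have hx0 : (0:ℝ) < x := by linarith
  rw [Real.rpow_neg_one, sub_mul, Finset.sum_mul]
  congr 1
  refine Finset.sum_congr rfl fun j _ => ?_
  rw [mul_assoc, ← Real.rpow_neg_one, ← Real.rpow_add hx0]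
  congr 2
  ring

theorem exists_prim {g : ℝ → ℝ} (hg : ContinuousOn g (Ici 1)) :
    ∃ H : ℝ → ℝ, ∀ x ≥ 1, HasDerivWithinAt H (g x) (Ici 1) x := by
  have hc : Continuous (fun t => g (max 1 t)) :=
    hg.comp_continuous (by fun_prop) fun t => mem_Ici.2 (le_max_left _ _)
  refine ⟨fun x => ∫ t in (1:ℝ)..x, g (max 1 t), fun x hx => ?_⟩
  have := (hc.integral_hasStrictDerivAt 1 x).hasDerivAt.hasDerivWithinAt (s := Ici 1)
  simpa [max_eq_right hx] using this

theorem cs_prim {α : ℝ} (hα : ∀ n : ℕ, α + 1 - n ≠ 0) {g : ℝ → ℝ} (hg : IsCSOn 1 α g) :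
    ∃ G, IsCSOn 1 (α + 1) G ∧ ∀ x ≥ 1, HasDerivWithinAt G (g x) (Ici 1) x := by
  obtain ⟨hgs, a, ha⟩ := hg
  obtain ⟨H, hH⟩ := exists_prim hgs.1.continuousOn
  obtain ⟨M, hM⟩ := exists_nat_gt (α + 1)
  set b : ℕ → ℝ := fun j => a j / (α + 1 - j) with hb
  -- derivative of the remainders
  have hder : ∀ (c : ℝ) (N : ℕ), ∀ x ≥ 1, HasDerivWithinAt
      (fun x => H x - c - ∑ j ∈ Finset.range N, b j * x ^ (α + 1 - j))
      (g x - ∑ j ∈ Finset.range N, a j * x ^ (α - j)) (Ici 1) x := by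
    intro c N x hx
    have hx0 : x ≠ 0 := by linarith
    refine ((hH x hx).sub_const c).sub (HasDerivWithinAt.fun_sum fun j _ => ?_)
    have h := ((Real.hasDerivAt_rpow_const (p := α + 1 - j) (Or.inl hx0)).const_mul (b j))
    convert h.hasDerivWithinAt using 1
    rw [hb, show α + 1 - j - 1 = α - j by ring]
    have := hα j
    field_simp
  -- the limit
  have hint : IntegrableOn (fun x => g x - ∑ j ∈ Finset.range M, a j * x ^ (α - j)) (Ioi 1) := by
    obtain ⟨C, hC0, hC⟩ := symb_bound (ha M) 0
    simp only [iteratedDerivWithin_zero, Nat.cast_zero, sub_zero] at hC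
    refine Integrable.mono' ((integrableOn_Ioi_rpow_of_lt
      (show α - M < -1 by linarith) zero_lt_one).const_mul C) ?_ ?_
    · exact ((ha M).1.continuousOn.mono Ioi_subset_Ici_self).aestronglyMeasurable measurableSet_Ioi
    · refine (ae_restrict_iff' measurableSet_Ioi).2 (Eventually.of_forall fun t ht => ?_)
      exact hC t (le_of_lt ht)
  have hlim := tendsto_limUnder_of_hasDerivAt_of_integrableOn_Ioi
    (fun x (hx : x ∈ Ioi (1:ℝ)) => (hder 0 M x (le_of_lt hx)).hasDerivAt (Ici_mem_nhds hx)) hint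
  set L := limUnder atTop (fun x => H x - 0 - ∑ j ∈ Finset.range M, b j * x ^ (α + 1 - j))
  have hlim2 : ∀ N, M ≤ N → Tendsto
      (fun x => H x - L - ∑ j ∈ Finset.range N, b j * x ^ (α + 1 - j)) atTop (𝓝 0) := by
    intro N hN
    induction N, hN using Nat.le_induction with
    | base =>
      have := hlim.sub_const L
      rw [sub_self] at this
      refine this.congr fun x => ?_
      ring
    | succ n hn ih =>
      have hn' : (M:ℝ) ≤ n := by exact_mod_cast hn
      have h2 := ((tendsto_rpow_neg_atTop (show 0 < -(α + 1 - n) by linarith)).const_mul (b n))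
      have := ih.sub h2
      rw [mul_zero, sub_zero] at this
      refine this.congr fun x => ?_
      rw [Finset.sum_range_succ, neg_neg]
      ring
  refine ⟨fun x => H x - L, cs_of b M fun N hN => ?_, fun x hx => (hH x hx).sub_const L⟩
  have hN' : (M:ℝ) ≤ N := by exact_mod_cast hN
  have := symb_prim (show α - N < -1 by linarith) (ha N) (hder L N) (hlim2 N hN)
  rwa [show α - N + 1 = α + 1 - N by ring] at this

theorem memP_add {α : ℝ} {k : ℕ} {f g : ℝ → ℝ} (hf : MemP 1 α k f) (hg : MemP 1 α k g) :
    MemP 1 α k (fun x => f x + g x) := by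
  obtain ⟨u, hu, hfu⟩ := hf
  obtain ⟨v, hv, hgv⟩ := hg
  refine ⟨fun l x => u l x + v l x, fun l hl => cs_add (hu l hl) (hv l hl), fun x hx => ?_⟩
  simp only [hfu x hx, hgv x hx, add_mul, Finset.sum_add_distrib]

theorem memP_smul {α : ℝ} {k : ℕ} (c : ℝ) {f : ℝ → ℝ} (hf : MemP 1 α k f) :
    MemP 1 α k (fun x => c * f x) := by
  obtain ⟨u, hu, hfu⟩ := hf
  refine ⟨fun l x => c * u l x, fun l hl => cs_smul c (hu l hl), fun x hx => ?_⟩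
  simp only [hfu x hx, mul_assoc, Finset.mul_sum]

theorem memP_zero (α : ℝ) (k : ℕ) : MemP 1 α k (fun _ => 0) :=
  ⟨fun _ _ => 0, fun _ _ => cs_zero α, fun x _ => by simp⟩

theorem memP_raise {α : ℝ} {k : ℕ} {f : ℝ → ℝ} (hf : MemP 1 (α - 1) k f) : MemP 1 α k f := by
  obtain ⟨u, hu, hfu⟩ := hf
  exact ⟨u, fun l hl => cs_raise (hu l hl), hfu⟩

theorem memP_single {α : ℝ} {m k : ℕ} (hmk : m ≤ k) {G : ℝ → ℝ} (hG : IsCSOn 1 α G) :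
    MemP 1 α k (fun x => G x * Real.log x ^ m) := by
  refine ⟨fun l x => if l = m then G x else 0, fun l _ => ?_, fun x _ => ?_⟩
  · by_cases h : l = m
    · simpa [h] using hG
    · simpa [h] using cs_zero α
  · simp only [ite_mul, zero_mul]
    rw [Finset.sum_ite_eq' ]
    simp [Nat.lt_succ_of_le hmk]

theorem memP_mono {α : ℝ} {m k : ℕ} (hmk : m ≤ k) {f : ℝ → ℝ} (hf : MemP 1 α m f) :
    MemP 1 α k f := by
  obtain ⟨u, hu, hfu⟩ := hf
  have : ∀ s : Finset ℕ, (∀ l ∈ s, l ≤ m) →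
      MemP 1 α k (fun x => ∑ l ∈ s, u l x * Real.log x ^ l) := by
    intro s
    induction s using Finset.induction_on with
    | empty => intro _; simpa using memP_zero α k
    | insert l s hl ih =>
      intro hs
      have hlm := hs l (Finset.mem_insert_self _ _)
      simp only [Finset.sum_insert hl]
      exact memP_add (memP_single (hlm.trans hmk) (hu l hlm))
        (ih fun j hj => hs j (Finset.mem_insert_of_mem hj))
  obtain ⟨v, hv, h⟩ := this (Finset.range (m + 1)) fun l hl => by
    simpa [Nat.lt_succ_iff] using hl
  exact ⟨v, hv, fun x hx => (hfu x hx).trans (h x hx)⟩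

theorem log_cont : ContinuousOn Real.log (Ici 1) :=
  Real.continuousOn_log.mono fun x hx => by
    have : (1:ℝ) ≤ x := hx
    simp only [mem_compl_iff, mem_singleton_iff]
    linarith

theorem inv_cont : ContinuousOn (fun x : ℝ => x⁻¹) (Ici 1) :=
  continuousOn_inv₀.mono fun x hx => by
    have : (1:ℝ) ≤ x := hx
    simp only [mem_compl_iff, mem_singleton_iff]
    linarith

theorem ii_of {f : ℝ → ℝ} (hf : ContinuousOn f (Ici 1)) {x : ℝ} (hx : x ≥ 1) :
    IntervalIntegrable f volume 1 x := by
  refine (hf.mono ?_).intervalIntegrable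
  rw [uIcc_of_le hx]
  exact Icc_subset_Ici_self

theorem ftc {f F : ℝ → ℝ} (hf : ContinuousOn f (Ici 1))
    (hF : ∀ x ≥ 1, HasDerivWithinAt F (f x) (Ici 1) x) {x : ℝ} (hx : x ≥ 1) :
    ∫ t in (1:ℝ)..x, f t = F x - F 1 := by
  refine intervalIntegral.integral_eq_sub_of_hasDeriv_right_of_le hx
    (fun t ht => (hF t ht.1).continuousWithinAt.mono Icc_subset_Ici_self) (fun t ht => ?_)
    (ii_of hf hx)
  exact (hF t ht.1.le).mono fun s hs => mem_Ici.2 (ht.1.le.trans (le_of_lt hs))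

/-- The primitive from `1` lies in `𝓟^{β;k}` up to a constant. -/
def Good (β : ℝ) (k : ℕ) (f : ℝ → ℝ) : Prop :=
  ∃ h c, MemP 1 β k h ∧ ∀ x ≥ (1:ℝ), ∫ t in (1:ℝ)..x, f t = h x + c

theorem good_of_prim {β : ℝ} {k : ℕ} {f F : ℝ → ℝ} (hf : ContinuousOn f (Ici 1))
    (hF : ∀ x ≥ 1, HasDerivWithinAt F (f x) (Ici 1) x) (hm : MemP 1 β k F) : Good β k f :=
  ⟨F, -F 1, hm, fun x hx => by rw [ftc hf hF hx]; ring⟩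

theorem good_congr {β : ℝ} {k : ℕ} {f g : ℝ → ℝ} (hf : Good β k f) (h : ∀ x ≥ 1, g x = f x) :
    Good β k g := by
  obtain ⟨u, c, hu, hc⟩ := hf
  refine ⟨u, c, hu, fun x hx => ?_⟩
  rw [← hc x hx]
  refine intervalIntegral.integral_congr fun t ht => ?_
  rw [uIcc_of_le hx] at ht
  exact h t ht.1

theorem good_add {β : ℝ} {k : ℕ} {f g : ℝ → ℝ} (hfc : ContinuousOn f (Ici 1))
    (hgc : ContinuousOn g (Ici 1)) (hf : Good β k f) (hg : Good β k g) :
    Good β k (fun x => f x + g x) := by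
  obtain ⟨u, c, hu, hc⟩ := hf
  obtain ⟨v, d, hv, hd⟩ := hg
  refine ⟨fun x => u x + v x, c + d, memP_add hu hv, fun x hx => ?_⟩
  rw [intervalIntegral.integral_add (ii_of hfc hx) (ii_of hgc hx), hc x hx, hd x hx]
  ring

theorem good_smul {β : ℝ} {k : ℕ} {f : ℝ → ℝ} (c : ℝ) (hf : Good β k f) :
    Good β k (fun x => c * f x) := by
  obtain ⟨u, d, hu, hd⟩ := hf
  refine ⟨fun x => c * u x, c * d, memP_smul c hu, fun x hx => ?_⟩
  rw [intervalIntegral.integral_const_mul, hd x hx]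
  ring

theorem good_mono {β : ℝ} {m k : ℕ} (hmk : m ≤ k) {f : ℝ → ℝ} (hf : Good β m f) : Good β k f := by
  obtain ⟨u, d, hu, hd⟩ := hf
  exact ⟨u, d, memP_mono hmk hu, hd⟩

theorem cs_cont {α : ℝ} {g : ℝ → ℝ} (hg : IsCSOn 1 α g) : ContinuousOn g (Ici 1) :=
  hg.1.1.continuousOn

theorem log_pow_deriv (m : ℕ) {x : ℝ} (hx : x ≥ 1) :
    HasDerivWithinAt (fun x => Real.log x ^ (m + 1)) ((m + 1) * Real.log x ^ m * x⁻¹) (Ici 1) x := by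
  have hx0 : x ≠ 0 := by linarith
  have := ((Real.hasDerivAt_log hx0).fun_pow (m + 1)).hasDerivWithinAt (s := Ici 1)
  simpa using this

theorem good_main {α : ℝ} (hα : ∀ n : ℕ, α + 1 - n ≠ 0) (m : ℕ) :
    ∀ g, IsCSOn 1 α g → Good (α + 1) m (fun x => g x * Real.log x ^ m) := by
  induction m with
  | zero =>
    intro g hg
    obtain ⟨G, hG, hGd⟩ := cs_prim hα hg
    refine good_of_prim (F := fun x => G x * Real.log x ^ 0) ?_ ?_ (memP_single le_rfl hG)
    · simpa using cs_cont hg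
    · simpa using hGd
  | succ m ih =>
    intro g hg
    obtain ⟨G, hG, hGd⟩ := cs_prim hα hg
    have h1 := good_mono (Nat.le_succ m) (good_smul (-(m + 1 : ℝ)) (ih _ (cs_div hG)))
    have hGl : ContinuousOn (fun x => G x * x⁻¹ * Real.log x ^ m) (Ici 1) :=
      ((cs_cont hG).mul inv_cont).mul (log_cont.pow m)
    have hF : ∀ x ≥ 1, HasDerivWithinAt (fun x => G x * Real.log x ^ (m + 1))
        (g x * Real.log x ^ (m + 1) + (m + 1) * (G x * x⁻¹ * Real.log x ^ m)) (Ici 1) x := by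
      intro x hx
      refine ((hGd x hx).mul (log_pow_deriv m hx)).congr_deriv ?_
      ring
    have hc : ContinuousOn (fun x => g x * Real.log x ^ (m + 1) +
        (m + 1) * (G x * x⁻¹ * Real.log x ^ m)) (Ici 1) :=
      ((cs_cont hg).mul (log_cont.pow _)).add (continuousOn_const.mul hGl)
    have h2 := good_of_prim hc hF (memP_single (le_refl (m + 1)) hG)
    refine good_congr (good_add hc (continuousOn_const.mul hGl) h2 h1) fun x _ => ?_
    simp only [Pi.mul_apply]
    ring

theorem good_neg_one (m : ℕ) {g : ℝ → ℝ} (hg : IsCSOn 1 (-1) g) :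
    Good 0 (m + 1) (fun x => g x * Real.log x ^ m) := by
  obtain ⟨a, ha⟩ := cs_tail hg
  obtain ⟨u, c, hu, hc⟩ := good_main (α := -1 - 1) (fun n => by
    have : (0:ℝ) ≤ n := Nat.cast_nonneg n
    linarith) m _ ha
  have h1 : Good 0 (m + 1) (fun x => (g x - a * x ^ (-1 : ℝ)) * Real.log x ^ m) := by
    refine ⟨u, c, memP_mono (Nat.le_succ m) (memP_raise ?_), hc⟩
    convert hu using 1
    ring
  have hmul : ContinuousOn (fun x => x⁻¹ * Real.log x ^ m) (Ici 1) :=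
    inv_cont.mul (log_cont.pow m)
  have hm : (m + 1 : ℝ) ≠ 0 := by positivity
  have h2 : Good 0 (m + 1) (fun x => a * (x⁻¹ * Real.log x ^ m)) := by
    refine good_of_prim (F := fun x => a / (m + 1) * Real.log x ^ (m + 1))
      (continuousOn_const.mul hmul) (fun x hx => ?_) (memP_single le_rfl (cs_const _))
    refine ((log_pow_deriv m hx).const_mul (a / (m + 1))).congr_deriv ?_
    field_simp
  refine good_congr (good_add ((cs_cont ha).mul (log_cont.pow m)) (continuousOn_const.mul hmul) h1 h2)
    fun x _ => ?_
  simp only [Pi.mul_apply, Pi.pow_apply, Real.rpow_neg_one]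
  ring

theorem good_sum {β : ℝ} {k : ℕ} {F : ℕ → ℝ → ℝ} (n : ℕ)
    (h : ∀ m < n, ContinuousOn (F m) (Ici 1) ∧ Good β k (F m)) :
    Good β k (fun x => ∑ m ∈ Finset.range n, F m x) := by
  induction n with
  | zero => exact ⟨fun _ => 0, 0, memP_zero β k, fun x _ => by simp⟩
  | succ n ih =>
    simp only [Finset.sum_range_succ]
    refine good_add (continuousOn_finsetSum _ fun m hm => (h m ?_).1) (h n (by omega)).1
      (ih fun m hm => h m (by omega)) (h n (by omega)).2
    have := Finset.mem_range.1 hm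
    omega

theorem good_final {β : ℝ} {k : ℕ} {f : ℝ → ℝ} (h : Good β k f) : MemPsum 1 β k 0 0 (intOp f) := by
  obtain ⟨u, c, hu, hc⟩ := h
  refine ⟨u, fun _ => c, hu, ⟨fun _ _ => c, fun _ _ => cs_const c, fun x _ => by simp⟩, hc⟩

end S17

/-- **Statement 17** (Lemma `lem:int_log`).
The integration operator maps `𝓟^{α;l}` into `𝓟^{α+1;l} + 𝓟^{0;0}` for every
`α ∈ ℝ∖ℤ_{≥-1}` and `l ∈ ℕ`, and maps `𝓟^{-1;l}` into `𝓟^{0;l+1} + 𝓟^{0;0}` for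
every `l ∈ ℕ`. -/
theorem statement17 :
    (∀ α : ℝ, (∀ n : ℤ, -1 ≤ n → α ≠ (n : ℝ)) → ∀ l : ℕ, ∀ f : ℝ → ℝ,
      MemP 1 α l f → MemPsum 1 (α + 1) l 0 0 (intOp f)) ∧
    (∀ l : ℕ, ∀ f : ℝ → ℝ,
      MemP 1 (-1) l f → MemPsum 1 0 (l + 1) 0 0 (intOp f)) := by
  refine ⟨fun α hα l f hf => ?_, fun l f hf => ?_⟩
  · obtain ⟨g, hg, hfg⟩ := hf
    have hα2 : ∀ n : ℕ, α + 1 - n ≠ 0 := fun n h =>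
      hα ((n : ℤ) - 1) (by omega) (by push_cast; linarith)
    refine S17.good_final (S17.good_congr (S17.good_sum (l + 1) fun m hm => ⟨?_, ?_⟩) hfg)
    · exact (S17.cs_cont (hg m (by omega))).mul (S17.log_cont.pow m)
    · exact S17.good_mono (by omega) (S17.good_main hα2 m _ (hg m (by omega)))
  · obtain ⟨g, hg, hfg⟩ := hf
    refine S17.good_final (S17.good_congr (S17.good_sum (l + 1) fun m hm => ⟨?_, ?_⟩) hfg)
    · exact (S17.cs_cont (hg m (by omega))).mul (S17.log_cont.pow m)
    · exact S17.good_mono (by omega) (S17.good_neg_one m (hg m (by omega)))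
end
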